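/- For every odd positive integer k and every α ∈ (0,1), the integral I_{k,α} := ∫₀^{π/2} sin(kθ) / (sin θ)^{2α} dθ equals (√π / 2) · Γ(1-α) Γ(α + k/2) / (Γ(α + 1/2) Γ(1 - α + k/2)). -/

import Mathlib

open Real intervalIntegral

theorem aux_beta (a b : ℝ) (ha : 0 < a) (hb : 0 < b) :
    ∫ x in Set.Ioo (0:ℝ) 1, x ^ (a - 1) * (1 - x) ^ (b - 1) =
      Real.Gamma a * Real.Gamma b / Real.Gamma (a + b) := by
  have h := ProbabilityTheory.beta_eq_betaIntegralReal a b ha hb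
  rw [ProbabilityTheory.beta] at h
  rw [h, Complex.betaIntegral, intervalIntegral.integral_of_le (by norm_num),
      ← MeasureTheory.integral_Ioc_eq_integral_Ioo, ← RCLike.re_to_complex, ← integral_re]
  · refine MeasureTheory.setIntegral_congr_fun measurableSet_Ioc fun x ⟨hx1, hx₂⟩ ↦ ?_
    norm_cast
    rw [← Complex.ofReal_cpow, ← Complex.ofReal_cpow, RCLike.re_to_complex,
      Complex.re_mul_ofReal, Complex.ofReal_re]
    all_goals linarith
  · have := Complex.betaIntegral_convergent (u := a) (v := b) (by simpa) (by simpa)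
    rwa [intervalIntegrable_iff_integrableOn_Ioc_of_le (by simp)] at this

theorem aux_image :
    (fun θ : ℝ => Real.sin θ ^ 2) '' Set.Ioo 0 (π / 2) = Set.Ioo 0 1 := by
  ext t
  constructor
  · rintro ⟨θ, ⟨h0, h1⟩, rfl⟩
    have hs : 0 < Real.sin θ := Real.sin_pos_of_pos_of_lt_pi h0 (by linarith)
    have hc : 0 < Real.cos θ := Real.cos_pos_of_mem_Ioo ⟨by linarith, h1⟩
    have := Real.sin_sq_add_cos_sq θ
    exact ⟨by positivity, by simp only; nlinarith [pow_pos hc 2]⟩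
  · rintro ⟨h0, h1⟩
    have hs0 : 0 < √t := Real.sqrt_pos.2 h0
    have hs1 : √t < 1 := by rw [Real.sqrt_lt' one_pos]; simpa using h1
    refine ⟨Real.arcsin (√t), ⟨Real.arcsin_pos.2 hs0, Real.arcsin_lt_pi_div_two.2 hs1⟩, ?_⟩
    simp only
    rw [Real.sin_arcsin (by linarith) hs1.le, Real.sq_sqrt h0.le]

theorem aux_base (α : ℝ) (hα1 : α < 1) :
    ∫ θ in Set.Ioo 0 (π / 2), Real.sin θ ^ (1 - 2 * α) =
      √π / 2 * Real.Gamma (1 - α) / Real.Gamma (1 - α + 1 / 2) := by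
  have h := aux_beta (1 - α) (1 / 2) (by linarith) (by norm_num)
  rw [← aux_image, MeasureTheory.integral_image_eq_integral_abs_deriv_smul
    (f' := fun θ => 2 * Real.sin θ * Real.cos θ) measurableSet_Ioo] at h
  · rw [Real.Gamma_one_half_eq] at h
    have h2 : ∫ θ in Set.Ioo 0 (π / 2), |2 * Real.sin θ * Real.cos θ| •
        ((Real.sin θ ^ 2) ^ (1 - α - 1) * (1 - Real.sin θ ^ 2) ^ ((1:ℝ) / 2 - 1)) =
        ∫ θ in Set.Ioo 0 (π / 2), 2 * Real.sin θ ^ (1 - 2 * α) := by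
      refine MeasureTheory.setIntegral_congr_fun measurableSet_Ioo fun θ ⟨h0, h1⟩ ↦ ?_
      have hs : 0 < Real.sin θ := Real.sin_pos_of_pos_of_lt_pi h0 (by linarith)
      have hc : 0 < Real.cos θ := Real.cos_pos_of_mem_Ioo ⟨by linarith, h1⟩
      have e1 : 1 - Real.sin θ ^ 2 = Real.cos θ ^ 2 := by
        have := Real.sin_sq_add_cos_sq θ
        linarith
      simp only [smul_eq_mul]
      rw [abs_of_pos (by positivity), e1, ← Real.rpow_natCast (Real.sin θ),
        ← Real.rpow_natCast (Real.cos θ), ← Real.rpow_mul hs.le, ← Real.rpow_mul hc.le]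
      have e2 : ((2:ℕ):ℝ) * (1 / 2 - 1) = -1 := by norm_num
      have e3 : 1 - 2 * α = 1 + ((2:ℕ):ℝ) * (1 - α - 1) := by push_cast; ring
      rw [e2, e3, Real.rpow_add hs, Real.rpow_neg_one, Real.rpow_one]
      field_simp
    rw [h2, MeasureTheory.integral_const_mul] at h
    linear_combination h / 2
  · intro x _
    have h4 : HasDerivAt (fun θ : ℝ => Real.sin θ ^ 2) (2 * Real.sin x * Real.cos x) x :=
      ((Real.hasDerivAt_sin x).pow 2).congr_deriv (by norm_num)
    exact h4.hasDerivWithinAt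
  · intro x hx y hy hxy
    have hpi := Real.pi_pos
    have hs : 0 < Real.sin x := Real.sin_pos_of_pos_of_lt_pi hx.1 (by linarith [hx.2])
    have hs' : 0 < Real.sin y := Real.sin_pos_of_pos_of_lt_pi hy.1 (by linarith [hy.2])
    have h3 : Real.sin x = Real.sin y := (pow_left_inj₀ hs.le hs'.le two_ne_zero).1 hxy
    exact Real.injOn_sin ⟨by linarith [hx.1], hx.2.le⟩ ⟨by linarith [hy.1], hy.2.le⟩ h3

theorem aux_int (α : ℝ) (hα1 : α < 1) (n : ℕ) :
    IntervalIntegrable (fun θ => Real.sin ((2 * n + 1) * θ) / Real.sin θ ^ (2 * α))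
      MeasureTheory.volume 0 (π / 2) := by
  have hpi := Real.pi_pos
  have h0 : IntervalIntegrable (fun θ => Real.sin θ ^ (1 - 2 * α))
      MeasureTheory.volume 0 (π / 2) := by
    rw [intervalIntegrable_iff_integrableOn_Ioo_of_le (by positivity)]
    apply MeasureTheory.Integrable.of_integral_ne_zero
    rw [aux_base α hα1]
    have h1 := Real.Gamma_pos_of_pos (show 0 < 1 - α by linarith)
    have h2 := Real.Gamma_pos_of_pos (show 0 < 1 - α + 1 / 2 by linarith)
    positivity
  have h1 := h0.continuousOn_mul (g := fun θ =>
    Polynomial.eval (Real.cos θ) (Polynomial.Chebyshev.U ℝ (2 * n))) (by fun_prop)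
  rw [intervalIntegrable_iff_integrableOn_Ioo_of_le (by positivity)] at h1 ⊢
  refine h1.congr_fun (fun θ ⟨h0, h1⟩ => ?_) measurableSet_Ioo
  have hs : 0 < Real.sin θ := Real.sin_pos_of_pos_of_lt_pi h0 (by linarith)
  have := Polynomial.Chebyshev.U_real_cos θ (2 * n)
  push_cast at this
  simp only
  rw [← this, Real.rpow_sub hs, Real.rpow_one]
  ring

theorem aux_rec (α : ℝ) (hα1 : α < 1) (n : ℕ) :
    (n + 3 / 2 - α) * ∫ θ in (0:ℝ)..(π/2),
      Real.sin ((2 * (n + 1 : ℕ) + 1) * θ) / Real.sin θ ^ (2 * α) =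
    (n + 1 / 2 + α) * ∫ θ in (0:ℝ)..(π/2),
      Real.sin ((2 * n + 1) * θ) / Real.sin θ ^ (2 * α) := by
  have hpi := Real.pi_pos
  have i1 := (aux_int α hα1 (n + 1)).const_mul (n + 3 / 2 - α)
  have i2 := (aux_int α hα1 n).const_mul (n + 1 / 2 + α)
  rw [← sub_eq_zero, ← intervalIntegral.integral_const_mul, ← intervalIntegral.integral_const_mul,
    ← intervalIntegral.integral_sub i1 i2]
  rw [intervalIntegral.integral_eq_sub_of_hasDerivAt_of_le
    (f := fun θ => Polynomial.eval (Real.cos θ) (Polynomial.Chebyshev.U ℝ (2 * n + 1)) *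
      Real.sin θ ^ (2 - 2 * α)) (by positivity) ?_ ?_ (i1.sub i2)]
  · have h1 := Polynomial.Chebyshev.U_real_cos (π / 2) (2 * n + 1)
    have h2 : Real.sin (((2 * n + 1 : ℤ) + 1) * (π / 2)) = 0 := by
      rw [show ((((2 * n + 1 : ℤ) : ℝ) + 1) * (π / 2)) = ((n + 1 : ℕ) : ℝ) * π by
        push_cast; ring]
      exact Real.sin_nat_mul_pi _
    rw [h2, Real.sin_pi_div_two, mul_one] at h1
    rw [h1, Real.sin_zero, Real.zero_rpow (by linarith)]
    simp
  · have : ContinuousOn (fun θ => Real.sin θ ^ (2 - 2 * α)) (Set.Icc 0 (π / 2)) :=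
      Real.continuous_sin.continuousOn.rpow_const (fun x _ => Or.inr (by linarith))
    exact ContinuousOn.mul (by fun_prop) this
  · intro θ ⟨h0, h1⟩
    have hs : 0 < Real.sin θ := Real.sin_pos_of_pos_of_lt_pi h0 (by linarith)
    have hd1 : HasDerivAt (fun θ : ℝ => Real.sin ((2 * n + 2) * θ))
        (Real.cos ((2 * n + 2) * θ) * (2 * n + 2)) θ := by
      simpa using ((hasDerivAt_id θ).const_mul (2 * n + 2 : ℝ)).sin
    have hd2 : HasDerivAt (fun θ : ℝ => Real.sin θ ^ (1 - 2 * α))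
        (Real.cos θ * (1 - 2 * α) * Real.sin θ ^ (1 - 2 * α - 1)) θ :=
      (Real.hasDerivAt_sin θ).rpow_const (Or.inl hs.ne')
    have hd := hd1.mul hd2
    have hev : (fun θ => Polynomial.eval (Real.cos θ) (Polynomial.Chebyshev.U ℝ (2 * n + 1)) *
      Real.sin θ ^ (2 - 2 * α)) =ᶠ[nhds θ]
        (fun θ : ℝ => Real.sin ((2 * n + 2) * θ)) * (fun θ : ℝ => Real.sin θ ^ (1 - 2 * α)) := by
      filter_upwards [Real.continuous_sin.continuousAt.eventually (lt_mem_nhds hs)] with x hx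
      have := Polynomial.Chebyshev.U_real_cos x (2 * n + 1)
      push_cast at this
      rw [Pi.mul_apply, show (2 * (n:ℝ) + 2) * x = (2 * n + 1 + 1) * x by ring, ← this,
        show 2 - 2 * α = 1 + (1 - 2 * α) by ring, Real.rpow_add hx, Real.rpow_one]
      ring
    refine (hd.congr_of_eventuallyEq hev).congr_deriv ?_
    have e1 : Real.sin ((2 * (n + 1 : ℕ) + 1) * θ) = Real.sin ((2 * n + 2) * θ) * Real.cos θ
        + Real.cos ((2 * n + 2) * θ) * Real.sin θ := by
      rw [← Real.sin_add]; congr 1; push_cast; ring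
    have e2 : Real.sin ((2 * n + 1) * θ) = Real.sin ((2 * n + 2) * θ) * Real.cos θ
        - Real.cos ((2 * n + 2) * θ) * Real.sin θ := by
      rw [← Real.sin_sub]; congr 1; ring
    rw [e1, e2, show 1 - 2 * α - 1 = -(2 * α) by ring, Real.rpow_neg hs.le, Real.rpow_sub hs,
      Real.rpow_one]
    ring

theorem aux_main (α : ℝ) (hα0 : 0 < α) (hα1 : α < 1) (n : ℕ) :
    ∫ θ in (0:ℝ)..(π/2), Real.sin ((2 * n + 1) * θ) / Real.sin θ ^ (2 * α) =
      √π / 2 * (Real.Gamma (1 - α) * Real.Gamma (α + (2 * n + 1) / 2)) /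
        (Real.Gamma (α + 1/2) * Real.Gamma (1 - α + (2 * n + 1) / 2)) := by
  have hpi := Real.pi_pos
  induction n with
  | zero =>
    have h2 := Real.Gamma_pos_of_pos (show 0 < α + 1 / 2 by linarith)
    have h3 := Real.Gamma_pos_of_pos (show 0 < 1 - α + 1 / 2 by linarith)
    rw [intervalIntegral.integral_of_le (by positivity),
      MeasureTheory.integral_Ioc_eq_integral_Ioo]
    have := aux_base α hα1
    simp only [Nat.cast_zero, mul_zero, zero_add, one_mul]
    trans ∫ θ in Set.Ioo 0 (π / 2), Real.sin θ ^ (1 - 2 * α)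
    · refine MeasureTheory.setIntegral_congr_fun measurableSet_Ioo fun θ ⟨h0, h1⟩ ↦ ?_
      have hs : 0 < Real.sin θ := Real.sin_pos_of_pos_of_lt_pi h0 (by linarith)
      rw [Real.rpow_sub hs, Real.rpow_one]
    · rw [this]
      field_simp
  | succ n ih =>
    have h := aux_rec α hα1 n
    rw [ih] at h
    have p1 : 0 < n + 3 / 2 - α := by
      have : (0:ℝ) ≤ n := n.cast_nonneg
      linarith
    have p2 : 0 < α + (2 * n + 1) / 2 := by positivity
    have p3 : 0 < 1 - α + (2 * (n:ℝ) + 1) / 2 := by linarith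
    have h2 := Real.Gamma_pos_of_pos (show 0 < α + 1 / 2 by linarith)
    have h3 := Real.Gamma_pos_of_pos p3
    rw [show α + (2 * ((n + 1 : ℕ) : ℝ) + 1) / 2 = (α + (2 * n + 1) / 2) + 1 by push_cast; ring,
      show 1 - α + (2 * ((n + 1 : ℕ) : ℝ) + 1) / 2 = (1 - α + (2 * n + 1) / 2) + 1 by
        push_cast; ring, Real.Gamma_add_one p2.ne', Real.Gamma_add_one p3.ne']
    apply mul_left_cancel₀ p1.ne'
    rw [h, show (n:ℝ) + 3 / 2 - α = 1 - α + (2 * n + 1) / 2 by ring,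
      show (n:ℝ) + 1 / 2 + α = α + (2 * n + 1) / 2 by ring]
    generalize α + (2 * (n:ℝ) + 1) / 2 = x at *
    generalize 1 - α + (2 * (n:ℝ) + 1) / 2 = y at *
    field_simp

theorem I_k_alpha_eval (k : ℕ) (hk : Odd k) (hk1 : 1 ≤ k) (α : ℝ) (hα0 : 0 < α) (hα1 : α < 1) :
    ∫ θ in (0:ℝ)..(π/2), Real.sin (k * θ) / Real.sin θ ^ (2 * α) =
      Real.sqrt π / 2 *
        (Real.Gamma (1 - α) * Real.Gamma (α + k / 2)) /
        (Real.Gamma (α + 1/2) * Real.Gamma (1 - α + k / 2)) := by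
  obtain ⟨n, rfl⟩ := hk
  have := aux_main α hα0 hα1 n
  push_cast
  exact this
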